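/- Let μ be the 2-alternating assignment with m blocks and let i be an even index with 0 ≤ i ≤ 2m−1, so that (i,i+1) is a top-arc crease. Then every valid layer ordering σ of the restriction of μ to faces 0,…,i extends in exactly one way to a valid layer ordering of the restriction of μ to faces 0,…,i+1; that is, there is exactly one valid layer ordering τ of the faces 0,…,i+1 (with respect to the creases (0,1),…,(i,i+1)) such that removing face i+1 from τ yields σ. -/

import Mathlib

/-- A crease direction: mountain or valley. -/
inductive MV : Type
  | M : MV
  | V : MV
deriving DecidableEq

/-- The value `σ(i)` of a layer ordering at face `i`, as a natural number
(`0` if `i` is out of range). -/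
def faceVal {n : ℕ} (σ : Equiv.Perm (Fin n)) (i : ℕ) : ℕ :=
  if h : i < n then (σ ⟨i, h⟩ : Fin n) else 0

/-- Condition (1): the layer ordering respects the mountain–valley assignment. -/
def MVRelations (n : ℕ) (μ : ℕ → MV) (σ : Equiv.Perm (Fin n)) : Prop :=
  ∀ i, i + 1 < n →
    if (μ i = MV.M ∧ Even i) ∨ (μ i = MV.V ∧ Odd i)
    then faceVal σ (i + 1) < faceVal σ i
    else faceVal σ i < faceVal σ (i + 1)

/-- `x` lies strictly between `lo` and `hi` (in either order). -/
def StrictlyBetween (x a b : ℕ) : Prop := min a b < x ∧ x < max a b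

/-- Condition (2): no two creases on the same side cross. -/
def NoCrossings (n : ℕ) (σ : Equiv.Perm (Fin n)) : Prop :=
  ∀ i j, i + 1 < n → j + 1 < n → i % 2 = j % 2 →
    ¬ Xor' (StrictlyBetween (faceVal σ j) (faceVal σ i) (faceVal σ (i + 1)))
           (StrictlyBetween (faceVal σ (j + 1)) (faceVal σ i) (faceVal σ (i + 1)))

/-- A valid layer ordering for the MV assignment `μ` on the `1 × n` strip. -/
def ValidLayerOrdering (n : ℕ) (μ : ℕ → MV) (σ : Equiv.Perm (Fin n)) : Prop :=
  MVRelations n μ σ ∧ NoCrossings n σ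

/-- `c(μ)`: the number of valid layer orderings for `μ` on the `1 × n` strip. -/
noncomputable def foldCount (n : ℕ) (μ : ℕ → MV) : ℕ :=
  Nat.card {σ : Equiv.Perm (Fin n) // ValidLayerOrdering n μ σ}

/-- The 2-alternating assignment: crease `(k,k+1)` is `M` if `⌊k/2⌋` is even, `V` otherwise. -/
def twoAlt : ℕ → MV := fun k => if Even (k / 2) then MV.M else MV.V

/-!
Inserting face `i + 1` directly next to face `i`, on the side prescribed by the crease, always
gives a valid ordering, and it is the only one in which the last two faces are adjacent. It
remains to see that in a 2-alternating strip a top arc `(i, i + 1)` never encloses another face.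
Up to reversing the layers, the crease descends from `i` to `i + 1`. If it encloses a face, let
`q` be the face immediately below `i` among `0, …, i - 1`.

Since `q` and `i` are in neighbouring layers, the path `q, …, i` closes up without new crossings:
the end faces are merged if `i - q` is even, and joined by a further crease if `i - q` is odd. A
closed meander has an odd number of descending creases: two noncrossing arcs with distinct ends
have an even number of inversions between them, so the inversion parity of the `2r` faces is the
parity of the number of descents on either side, and starting the closed path one face later
changes it by `2r - 1`. For a 2-alternating strip this forces `i - q` to be `2` or `3` modulo `4`.
Then the top arc at `q` has `q` as its lower end, its upper end lies above `i`, and it crosses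
`(i, i + 1)`.
-/

open Finset

section NoncrossingSequences

variable {α : Type*} [LinearOrder α]

theorem mem_uIoo_iff {a b x : α} : x ∈ Set.uIoo a b ↔ a < x ∧ x < b ∨ b < x ∧ x < a := by
  rcases le_total a b with h | h
  · simp only [Set.uIoo_of_le h, Set.mem_Ioo]
    grind
  · simp only [Set.uIoo_of_ge h, Set.mem_Ioo]
    grind

/-- Creases `(k, k + 1)` of the same parity with `k < n` do not cross when face `k` lies in layer
`f k`. The layers need not be distinct, so that a path may be closed up by `f n = f 0`. -/
def NoncrossingCreases (f : ℕ → α) (n : ℕ) : Prop :=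
  ∀ k l, k < n → l < n → k % 2 = l % 2 →
    (f l ∈ Set.uIoo (f k) (f (k + 1)) ↔ f (l + 1) ∈ Set.uIoo (f k) (f (k + 1)))

namespace NoncrossingCreases

variable {f : ℕ → α} {n : ℕ}

theorem mono (h : NoncrossingCreases f n) {m : ℕ} (hmn : m ≤ n) : NoncrossingCreases f m :=
  fun k l hk hl => h k l (hk.trans_le hmn) (hl.trans_le hmn)

theorem shift {q : ℕ} (h : NoncrossingCreases f (q + n)) :
    NoncrossingCreases (fun k => f (q + k)) n :=
  fun k l hk hl hkl => h (q + k) (q + l) (by omega) (by omega) (by omega)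

theorem toDual (h : NoncrossingCreases f n) :
    NoncrossingCreases (OrderDual.toDual ∘ f) n := by
  intro k l hk hl hkl
  simpa only [Function.comp_apply, Set.uIoo_toDual, Set.mem_preimage, OrderDual.ofDual_toDual]
    using h k l hk hl hkl

theorem congr {β : Type*} [LinearOrder β] {g : ℕ → β} (h : NoncrossingCreases f n)
    (hfg : ∀ x y, x ≤ n → y ≤ n → (f x < f y ↔ g x < g y)) : NoncrossingCreases g n := by
  intro k l hk hl hkl
  have hmem (z : ℕ) (hz : z ≤ n) :
      g z ∈ Set.uIoo (g k) (g (k + 1)) ↔ f z ∈ Set.uIoo (f k) (f (k + 1)) := by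
    simp only [mem_uIoo_iff, hfg k z hk.le hz, hfg z (k + 1) hz hk, hfg (k + 1) z hk hz,
      hfg z k hz hk.le]
  rw [hmem l hl.le, hmem (l + 1) hl]
  exact h k l hk hl hkl

theorem succ_of_adjacent (h : NoncrossingCreases f n) (hinj : Set.InjOn f (Set.Iic (n + 1)))
    (hadj : ∀ x < n, f x < f n ↔ f x < f (n + 1)) : NoncrossingCreases f (n + 1) := by
  intro k l hk hl hkl
  rcases Nat.lt_succ_iff_lt_or_eq.1 hk with hk | rfl <;>
    rcases Nat.lt_succ_iff_lt_or_eq.1 hl with hl | rfl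
  · exact h k l hk hl hkl
  · have hne (x : ℕ) (hx : x < l) : f x ≠ f l ∧ f x ≠ f (l + 1) := by
      constructor <;> exact hinj.ne (by grind) (by grind) (by omega)
    grind [mem_uIoo_iff]
  · grind [mem_uIoo_iff]
  · simp only [Set.left_notMem_uIoo, Set.right_notMem_uIoo]

theorem update_of_even (h : NoncrossingCreases f n) (hinj : Set.InjOn f (Set.Iic n))
    (hadj : ∀ x, 0 < x → x < n → (f x < f 0 ↔ f x < f n)) (hn : Even n) :
    NoncrossingCreases (Function.update f n (f 0)) n := by
  have hne (x : ℕ) (hx : 0 < x) (hxn : x < n) : f x ≠ f 0 ∧ f x ≠ f n := by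
    constructor <;> exact hinj.ne (by grind) (by grind) (by omega)
  intro k l hk hl hkl
  have hkl' := h k l hk hl hkl
  simp only [Function.update_apply, hk.ne, hl.ne, if_false]
  by_cases hk' : k + 1 = n <;> by_cases hl' : l + 1 = n
  · obtain rfl : k = l := by omega
    simp only [hk', if_true, Set.left_notMem_uIoo, Set.right_notMem_uIoo]
  · grind [mem_uIoo_iff]
  · grind [mem_uIoo_iff]
  · simpa only [hk', hl', if_false] using hkl'

theorem update_succ_of_odd (h : NoncrossingCreases f n) (hinj : Set.InjOn f (Set.Iic n))
    (hadj : ∀ x, 0 < x → x < n → (f x < f 0 ↔ f x < f n)) (hn : Odd n) :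
    NoncrossingCreases (Function.update f (n + 1) (f 0)) (n + 1) := by
  have hne (x : ℕ) (hx : 0 < x) (hxn : x < n) : f x ≠ f 0 ∧ f x ≠ f n := by
    constructor <;> exact hinj.ne (by grind) (by grind) (by omega)
  intro k l hk hl hkl
  simp only [Function.update_apply, hk.ne, hl.ne, if_false, Nat.add_right_cancel_iff]
  rcases Nat.lt_succ_iff_lt_or_eq.1 hk with hk | rfl <;>
    rcases Nat.lt_succ_iff_lt_or_eq.1 hl with hl | rfl
  · simpa only [hk.ne, hl.ne, if_false] using h k l hk hl hkl
  · grind [mem_uIoo_iff]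
  · grind [mem_uIoo_iff]
  · simp only [if_true, Set.left_notMem_uIoo, Set.right_notMem_uIoo]

end NoncrossingCreases

/-- The indicator modulo 2 of the pair `(a, b)` being an inversion. -/
def descent (a b : α) : ZMod 2 := if b < a then 1 else 0

theorem descent_add_descent_swap {a b : α} (h : a ≠ b) : descent a b + descent b a = 1 := by
  rcases h.lt_or_gt with h | h <;> simp [descent, h, h.le.not_gt]

theorem descent_add_descent_left {a b x : α} (ha : a ≠ x) (hb : b ≠ x) :
    descent a x + descent b x = (Set.uIoo a b).indicator 1 x := by
  have htwo : (1 + 1 : ZMod 2) = 0 := CharTwo.add_self_eq_zero 1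
  simp only [descent, Set.indicator, mem_uIoo_iff, Pi.one_apply]
  grind

/-- The number of inversions of the finite sequence `f 0, …, f (n - 1)`, modulo 2. -/
def inversionParity (f : ℕ → α) (n : ℕ) : ZMod 2 :=
  ∑ y ∈ range n, ∑ x ∈ range y, descent (f x) (f y)

theorem inversionParity_succ (f : ℕ → α) (n : ℕ) :
    inversionParity f (n + 1) = inversionParity f n + ∑ x ∈ range n, descent (f x) (f n) :=
  sum_range_succ _ n

theorem inversionParity_succ' (f : ℕ → α) (n : ℕ) :
    inversionParity f (n + 1) =
      inversionParity (fun x => f (x + 1)) n + ∑ y ∈ range n, descent (f 0) (f (y + 1)) := by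
  simp only [inversionParity, sum_range_succ' _ n, range_zero, sum_empty, add_zero,
    ← sum_add_distrib, sum_range_succ']

theorem inversionParity_add_rotate {f : ℕ → α} {n : ℕ} (hclosed : f (n + 1) = f 0)
    (hne : ∀ x < n, f (x + 1) ≠ f 0) :
    inversionParity f (n + 1) + inversionParity (fun x => f (x + 1)) (n + 1) = n := by
  have hswap : ∑ x ∈ range n, (descent (f 0) (f (x + 1)) + descent (f (x + 1)) (f 0)) = n := by
    rw [sum_congr rfl fun x hx => descent_add_descent_swap (hne x (mem_range.1 hx)).symm]
    simp
  rw [inversionParity_succ', inversionParity_succ, hclosed, ← hswap, sum_add_distrib]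
  linear_combination CharTwo.add_self_eq_zero (inversionParity (fun x => f (x + 1)) n)

theorem sum_range_two_mul {M : Type*} [AddCommMonoid M] (g : ℕ → M) (r : ℕ) :
    ∑ x ∈ range (2 * r), g x = ∑ k ∈ range r, (g (2 * k) + g (2 * k + 1)) := by
  induction r with
  | zero => simp
  | succ r ih => rw [Nat.mul_succ, sum_range_succ, sum_range_succ, ih, sum_range_succ, add_assoc]

theorem inversionParity_eq_sum_arcs {f : ℕ → α} {r : ℕ} (hinj : Set.InjOn f (Set.Iio (2 * r)))
    (hnc : ∀ k < r, ∀ l < r, f (2 * l) ∈ Set.uIoo (f (2 * k)) (f (2 * k + 1)) ↔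
      f (2 * l + 1) ∈ Set.uIoo (f (2 * k)) (f (2 * k + 1))) :
    inversionParity f (2 * r) = ∑ k ∈ range r, descent (f (2 * k)) (f (2 * k + 1)) := by
  induction r with
  | zero => rfl
  | succ r ih =>
    have hsum (z : ℕ) (hz : 2 * r ≤ z) (hz' : z < 2 * (r + 1)) :
        ∑ x ∈ range (2 * r), descent (f x) (f z) =
          ∑ k ∈ range r, (Set.uIoo (f (2 * k)) (f (2 * k + 1))).indicator 1 (f z) := by
      rw [sum_range_two_mul]
      refine sum_congr rfl fun k hk => ?_
      have hk := mem_range.1 hk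
      exact descent_add_descent_left (hinj.ne (by grind) (by grind) (by omega))
        (hinj.ne (by grind) (by grind) (by omega))
    have hcancel : ∑ x ∈ range (2 * r), descent (f x) (f (2 * r)) =
        ∑ x ∈ range (2 * r), descent (f x) (f (2 * r + 1)) := by
      rw [hsum _ le_rfl (by omega), hsum _ (by omega) (by omega)]
      refine sum_congr rfl fun k hk => ?_
      exact Set.indicator_eq_indicator (hnc k (by grind) r (by omega)) rfl
    rw [Nat.mul_succ, inversionParity_succ, inversionParity_succ, sum_range_succ _ (2 * r),
      sum_range_succ _ r, hcancel,
      ih (hinj.mono (Set.Iio_subset_Iio (by omega))) fun k hk l hl => hnc k (by omega) l (by omega)]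
    linear_combination
      CharTwo.add_self_eq_zero (∑ x ∈ range (2 * r), descent (f x) (f (2 * r + 1)))

theorem sum_descent_of_closed {f : ℕ → α} {n : ℕ} (hn : Even n) (hpos : 0 < n)
    (hclosed : f n = f 0) (hinj : Set.InjOn f (Set.Iio n)) (hnc : NoncrossingCreases f n) :
    ∑ k ∈ range n, descent (f k) (f (k + 1)) = 1 := by
  obtain ⟨r, rfl⟩ : ∃ r, n = 2 * (r + 1) := ⟨n / 2 - 1, by grind⟩
  have heven := inversionParity_eq_sum_arcs hinj fun k hk l hl =>
    hnc (2 * k) (2 * l) (by omega) (by omega) (by omega)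
  have hinj' : Set.InjOn (fun x => f (x + 1)) (Set.Iio (2 * (r + 1))) := by
    intro x hx y hy hxy
    have hwrap (z : ℕ) (hz : 0 < z) (hz' : z < 2 * (r + 1)) : f z ≠ f 0 :=
      hinj.ne hz' (by grind) hz.ne'
    grind [Set.InjOn]
  have hodd := inversionParity_eq_sum_arcs hinj' fun k hk l hl =>
    hnc (2 * k + 1) (2 * l + 1) (by omega) (by omega) (by omega)
  have hrot := inversionParity_add_rotate (n := 2 * r + 1) hclosed fun x hx =>
    hinj.ne (by grind) (by grind) (by omega)
  rw [sum_range_two_mul, sum_add_distrib, ← heven, ← hodd]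
  refine hrot.trans ?_
  push_cast
  rw [show (2 : ZMod 2) = 0 from rfl, zero_mul, zero_add]

theorem sum_descent_of_adjacent_even {f : ℕ → α} {n : ℕ} (hn : Even n) (hpos : 0 < n)
    (hinj : Set.InjOn f (Set.Iic n)) (hnc : NoncrossingCreases f n)
    (hadj : ∀ x, 0 < x → x < n → (f x < f 0 ↔ f x < f n)) :
    ∑ k ∈ range n, descent (f k) (f (k + 1)) = 1 := by
  have hclosed := sum_descent_of_closed hn hpos (by simp [hpos.ne])
    (fun x hx y hy hxy => hinj (by grind) (by grind) (by grind)) (hnc.update_of_even hinj hadj hn)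
  rw [← hclosed]
  refine sum_congr rfl fun k hk => ?_
  have hk := mem_range.1 hk
  rw [Function.update_of_ne hk.ne]
  rcases eq_or_ne (k + 1) n with rfl | hkn
  · have hk0 : f k ≠ f 0 := hinj.ne (by grind) (by grind) (by grind)
    have hk1 : f k ≠ f (k + 1) := hinj.ne (by grind) (by grind) (by omega)
    simp only [Function.update_self, descent]
    grind
  · rw [Function.update_of_ne hkn]

theorem sum_descent_of_adjacent_odd {f : ℕ → α} {n : ℕ} (hn : Odd n)
    (hinj : Set.InjOn f (Set.Iic n)) (hnc : NoncrossingCreases f n)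
    (hadj : ∀ x, 0 < x → x < n → (f x < f 0 ↔ f x < f n)) :
    ∑ k ∈ range n, descent (f k) (f (k + 1)) + descent (f n) (f 0) = 1 := by
  have hclosed := sum_descent_of_closed hn.add_one n.succ_pos (by simp)
    (fun x hx y hy hxy => hinj (by grind) (by grind) (by grind))
    (hnc.update_succ_of_odd hinj hadj hn)
  rw [← hclosed, sum_range_succ, Function.update_self, Function.update_of_ne n.succ_ne_self.symm]
  congr 1
  refine sum_congr rfl fun k hk => ?_
  have hk := mem_range.1 hk
  rw [Function.update_of_ne (by omega), Function.update_of_ne (by omega)]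

theorem sum_range_four_mul_eq_zero {g : ℕ → ZMod 2} {t : ℕ}
    (hg : ∀ k, k + 2 < 4 * t → g (k + 2) = g k + 1) : ∑ k ∈ range (4 * t), g k = 0 := by
  induction t with
  | zero => simp
  | succ t ih =>
    simp only [Nat.mul_succ, sum_range_succ, ih fun k hk => hg k (by omega),
      hg (4 * t) (by omega), hg (4 * t + 1) (by omega)]
    linear_combination CharTwo.add_self_eq_zero (g (4 * t) + g (4 * t + 1) + 1)

theorem two_le_mod_four_of_adjacent {f : ℕ → α} {n : ℕ} (hpos : 0 < n)
    (hinj : Set.InjOn f (Set.Iic n)) (hnc : NoncrossingCreases f n)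
    (hdir : ∀ k < n, f (k + 1) < f k ↔ (n - k) % 4 ≤ 1) (hlt : f 0 < f n)
    (hadj : ∀ x, 0 < x → x < n → (f x < f 0 ↔ f x < f n)) : 2 ≤ n % 4 := by
  have hdescent (k : ℕ) (hk : k < n) :
      descent (f k) (f (k + 1)) = if (n - k) % 4 ≤ 1 then 1 else 0 := by
    simp only [descent, hdir k hk]
  have hflip (t : ℕ) (ht : 4 * t ≤ n) :
      ∑ k ∈ range (4 * t), descent (f k) (f (k + 1)) = 0 := by
    refine sum_range_four_mul_eq_zero fun k hk => ?_
    have htwo : (1 + 1 : ZMod 2) = 0 := CharTwo.add_self_eq_zero 1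
    rw [hdescent k (by omega), hdescent (k + 2) (by omega)]
    grind
  by_contra! hmod
  obtain ⟨t, rfl | rfl⟩ : ∃ t, n = 4 * t ∨ n = 4 * t + 1 := ⟨n / 4, by omega⟩
  · have hsum := sum_descent_of_adjacent_even (by grind) hpos hinj hnc hadj
    rw [hflip t le_rfl] at hsum
    exact zero_ne_one hsum
  · have hsum := sum_descent_of_adjacent_odd (by grind) hinj hnc hadj
    rw [sum_range_succ, hflip t (by omega), hdescent (4 * t) (by omega), if_pos (by omega), descent,
      if_pos hlt, zero_add, CharTwo.add_self_eq_zero] at hsum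
    exact zero_ne_one hsum

theorem two_le_sub_mod_four_of_layer_below {f : ℕ → α} {n q : ℕ} (hqn : q < n)
    (hinj : Set.InjOn f (Set.Iic n)) (hnc : NoncrossingCreases f n)
    (hdir : ∀ k < n, f (k + 1) < f k ↔ (n - k) % 4 ≤ 1) (hlt : f q < f n)
    (hmax : ∀ x < n, f x < f n → f x ≤ f q) : 2 ≤ (n - q) % 4 := by
  obtain ⟨d, rfl⟩ := Nat.exists_eq_add_of_le hqn.le
  rw [Nat.add_sub_cancel_left]
  refine two_le_mod_four_of_adjacent (f := fun k => f (q + k)) (by omega)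
    (fun x hx y hy hxy => Nat.add_left_cancel (hinj (by grind) (by grind) hxy))
    hnc.shift (fun k hk => ?_) hlt fun x hx hxd => ?_
  · rw [← Nat.add_sub_add_left q d k]
    exact hdir (q + k) (by omega)
  · have hne : f (q + x) ≠ f q := hinj.ne (by grind) (by grind) (by omega)
    exact ⟨fun h => h.trans hlt, fun h => (hmax (q + x) (by omega) h).lt_of_ne hne⟩

theorem last_adjacent_of_descents {f : ℕ → α} {n : ℕ} (hn : Even n)
    (hinj : Set.InjOn f (Set.Iic (n + 1))) (hnc : NoncrossingCreases f (n + 1))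
    (hdir : ∀ k ≤ n, f (k + 1) < f k ↔ (n - k) % 4 ≤ 1) :
    ∀ x < n, f x < f n ↔ f x < f (n + 1) := by
  intro x hx
  have hlast : f (n + 1) < f n := (hdir n le_rfl).2 (by simp)
  refine ⟨fun hxn => ?_, fun h => h.trans hlast⟩
  by_contra! hle
  obtain ⟨q, hq, hmax⟩ := exists_max_image ((range n).filter fun y => f y < f n) f
    ⟨x, by simp [hx, hxn]⟩
  simp only [mem_filter, mem_range, and_imp] at hq hmax
  obtain ⟨hqn, hqlt⟩ := hq
  have hne {y z : ℕ} (hy : y ≤ n + 1) (hz : z ≤ n + 1) (hyz : y ≠ z) : f y ≠ f z :=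
    hinj.ne hy hz hyz
  have hmod : 2 ≤ (n - q) % 4 :=
    two_le_sub_mod_four_of_layer_below hqn (hinj.mono (Set.Iic_subset_Iic.2 n.le_succ))
      (hnc.mono n.le_succ) (fun k hk => hdir k hk.le) hqlt hmax
  -- Face `q` is the lower end of its crease on the side of `(n, n + 1)`; the upper end `p` lies
  -- above face `n`, so the two creases cross.
  obtain ⟨p, hpn, hqp, hcross⟩ : ∃ p < n, f q < f p ∧
      (f q ∈ Set.uIoo (f n) (f (n + 1)) ↔ f p ∈ Set.uIoo (f n) (f (n + 1))) := by
    obtain hmod | hmod : (n - q) % 4 = 2 ∨ (n - q) % 4 = 3 := by omega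
    · have hup : f q ≤ f (q + 1) := not_lt.1 fun h => by have := (hdir q hqn.le).1 h; omega
      exact ⟨q + 1, by omega, hup.lt_of_ne (hne (by omega) (by omega) (by omega)),
        hnc n q (by omega) (by omega) (by omega)⟩
    · obtain ⟨p, rfl⟩ : ∃ p, q = p + 1 := ⟨q - 1, by grind⟩
      exact ⟨p, by omega, (hdir p (by omega)).2 (by omega),
        (hnc n p (by omega) (by omega) (by omega)).symm⟩
  have hnp : f n ≤ f p := not_lt.1 fun h => (hmax p hpn h).not_gt hqp
  have hbetween : f q ∈ Set.uIoo (f n) (f (n + 1)) :=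
    Set.mem_uIoo_of_gt ((hle.trans (hmax x hx hxn)).lt_of_ne
      (hne le_rfl (by omega) (by omega))) hqlt
  have hpmem := hcross.1 hbetween
  rw [Set.uIoo_of_gt hlast] at hpmem
  exact hpmem.2.not_ge hnp

end NoncrossingSequences

section LayerOrderings

theorem faceVal_val {n : ℕ} (σ : Equiv.Perm (Fin n)) (a : Fin n) : faceVal σ a = σ a :=
  dif_pos a.isLt

theorem injOn_faceVal {n : ℕ} (σ : Equiv.Perm (Fin n)) : Set.InjOn (faceVal σ) (Set.Iio n) := by
  intro x hx y hy hxy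
  have hval : (σ ⟨x, hx⟩ : ℕ) = σ ⟨y, hy⟩ := by
    rw [← faceVal_val, ← faceVal_val]
    exact hxy
  exact congrArg Fin.val (σ.injective (Fin.ext hval))

theorem noCrossings_iff {n : ℕ} {σ : Equiv.Perm (Fin (n + 1))} :
    NoCrossings (n + 1) σ ↔ NoncrossingCreases (faceVal σ) n := by
  simp only [NoCrossings, NoncrossingCreases, Nat.add_lt_add_iff_right]
  exact forall₅_congr fun _ _ _ _ _ => not_xor _ _

/-- The condition under which `MVRelations` places face `k + 1` below face `k`: the crease
`(k, k + 1)` is a mountain and a top arc, or a valley and a bottom arc. -/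
def CreaseDescends (μ : ℕ → MV) (k : ℕ) : Prop := μ k = MV.M ∧ Even k ∨ μ k = MV.V ∧ Odd k

theorem creaseDescends_twoAlt_iff {k : ℕ} : CreaseDescends twoAlt k ↔ k % 4 = 0 ∨ k % 4 = 3 := by
  unfold CreaseDescends twoAlt
  grind

theorem mvRelations_iff {n : ℕ} {μ : ℕ → MV} {σ : Equiv.Perm (Fin n)} :
    MVRelations n μ σ ↔
      ∀ k, k + 1 < n → (faceVal σ (k + 1) < faceVal σ k ↔ CreaseDescends μ k) := by
  refine forall₂_congr fun k hk => ?_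
  have hne : faceVal σ k ≠ faceVal σ (k + 1) :=
    (injOn_faceVal σ).ne (by grind) hk k.lt_succ_self.ne
  unfold CreaseDescends
  split_ifs with h <;> simp only [h, iff_true, iff_false, not_lt, hne.le_iff_lt]

/-- The ordering `σ` is obtained from `τ` by removing the last face. -/
def IsExtension {n : ℕ} (σ : Equiv.Perm (Fin n)) (τ : Equiv.Perm (Fin (n + 1))) : Prop :=
  ∀ a b : Fin n, σ a < σ b ↔ τ a.castSucc < τ b.castSucc

theorem isExtension_iff {n : ℕ} {σ : Equiv.Perm (Fin n)} {τ : Equiv.Perm (Fin (n + 1))} :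
    IsExtension σ τ ↔
      ∀ x < n, ∀ y < n, faceVal σ x < faceVal σ y ↔ faceVal τ x < faceVal τ y := by
  simp only [IsExtension, Fin.lt_def, ← faceVal_val, Fin.forall_iff, Fin.val_castSucc]

/-- No other face lies between the last two faces `n` and `n + 1`. -/
def LastFacesAdjacent {n : ℕ} (τ : Equiv.Perm (Fin (n + 2))) : Prop :=
  ∀ x < n, faceVal τ x < faceVal τ n ↔ faceVal τ x < faceVal τ (n + 1)

theorem ValidLayerOrdering.of_isExtension {n : ℕ} {μ : ℕ → MV} {σ : Equiv.Perm (Fin (n + 1))}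
    {τ : Equiv.Perm (Fin (n + 2))} (hσ : ValidLayerOrdering (n + 1) μ σ) (hext : IsExtension σ τ)
    (hadj : LastFacesAdjacent τ)
    (hlast : faceVal τ (n + 1) < faceVal τ n ↔ CreaseDescends μ n) :
    ValidLayerOrdering (n + 2) μ τ := by
  rw [isExtension_iff] at hext
  refine ⟨mvRelations_iff.2 fun k hk => ?_, noCrossings_iff.2 ?_⟩
  · obtain hkn | rfl : k < n ∨ k = n := by omega
    · rw [← hext (k + 1) (by omega) k (by omega)]
      exact mvRelations_iff.1 hσ.1 k (by omega)
    · exact hlast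
  · have hnc : NoncrossingCreases (faceVal τ) n :=
      (noCrossings_iff.1 hσ.2).congr fun x y hx hy => hext x (by omega) y (by omega)
    exact hnc.succ_of_adjacent ((injOn_faceVal τ).mono fun x hx => Nat.lt_succ_of_le hx) hadj

theorem perm_eq_of_faceVal_lt_iff {n : ℕ} {τ τ' : Equiv.Perm (Fin n)}
    (h : ∀ x < n, ∀ y < n, faceVal τ x < faceVal τ y ↔ faceVal τ' x < faceVal τ' y) :
    τ = τ' := by
  have hlt (a b : Fin n) : τ a < τ b ↔ τ' a < τ' b := by
    simpa only [faceVal_val, Fin.val_fin_lt] using h a a.isLt b b.isLt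
  have hmono : StrictMono (τ' ∘ τ.symm) := fun a b hab => (hlt _ _).1 (by simpa using hab)
  ext a
  simpa using congrArg Fin.val (congrFun hmono.eq_id (τ a)).symm

theorem ValidLayerOrdering.eq_of_isExtension {n : ℕ} {μ : ℕ → MV} {σ : Equiv.Perm (Fin (n + 1))}
    {τ τ' : Equiv.Perm (Fin (n + 2))} (hτ : ValidLayerOrdering (n + 2) μ τ)
    (hτ' : ValidLayerOrdering (n + 2) μ τ') (hadj : LastFacesAdjacent τ)
    (hadj' : LastFacesAdjacent τ') (hext : IsExtension σ τ) (hext' : IsExtension σ τ') :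
    τ = τ' := by
  rw [isExtension_iff] at hext hext'
  have hcrease : faceVal τ (n + 1) < faceVal τ n ↔ faceVal τ' (n + 1) < faceVal τ' n :=
    (mvRelations_iff.1 hτ.1 n (by omega)).trans (mvRelations_iff.1 hτ'.1 n (by omega)).symm
  have hne (ρ : Equiv.Perm (Fin (n + 2))) (x : ℕ) (hx : x < n + 1) :
      faceVal ρ x ≠ faceVal ρ (n + 1) :=
    (injOn_faceVal ρ).ne (Nat.lt_succ_of_lt hx) (Nat.lt_succ_self _) hx.ne
  have hlast (x : ℕ) (hx : x < n + 1) :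
      faceVal τ x < faceVal τ (n + 1) ↔ faceVal τ' x < faceVal τ' (n + 1) := by
    obtain hxn | rfl : x < n ∨ x = n := by omega
    · rw [← hadj x hxn, ← hadj' x hxn, ← hext x hx n n.lt_succ_self, hext' x hx n n.lt_succ_self]
    · have := hne τ x hx
      have := hne τ' x hx
      omega
  refine perm_eq_of_faceVal_lt_iff fun x hx y hy => ?_
  grind

/-- The layer ordering obtained from `σ` by inserting a new last face in layer `c`. -/
def insertLastFace {n : ℕ} (σ : Equiv.Perm (Fin n)) (c : Fin (n + 1)) : Equiv.Perm (Fin (n + 1)) :=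
  finSuccEquivLast.trans ((Equiv.optionCongr σ).trans (finSuccEquiv' c).symm)

theorem insertLastFace_last {n : ℕ} (σ : Equiv.Perm (Fin n)) (c : Fin (n + 1)) :
    insertLastFace σ c (Fin.last n) = c := by
  simp [insertLastFace]

theorem insertLastFace_castSucc {n : ℕ} (σ : Equiv.Perm (Fin n)) (c : Fin (n + 1)) (a : Fin n) :
    insertLastFace σ c a.castSucc = c.succAbove (σ a) := by
  simp [insertLastFace]

theorem isExtension_insertLastFace {n : ℕ} (σ : Equiv.Perm (Fin n)) (c : Fin (n + 1)) :
    IsExtension σ (insertLastFace σ c) := fun a b => by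
  rw [insertLastFace_castSucc, insertLastFace_castSucc, Fin.succAbove_lt_succAbove_iff]

theorem exists_isExtension_lastFacesAdjacent {n : ℕ} (σ : Equiv.Perm (Fin (n + 1))) (p : Prop) :
    ∃ τ : Equiv.Perm (Fin (n + 2)), IsExtension σ τ ∧ LastFacesAdjacent τ ∧
      (faceVal τ (n + 1) < faceVal τ n ↔ p) := by
  classical
  let s := σ (Fin.last n)
  let c := if p then s.castSucc else s.succ
  have hnew : faceVal (insertLastFace σ c) (n + 1) = c :=
    (faceVal_val _ (Fin.last (n + 1))).trans (congrArg Fin.val (insertLastFace_last σ c))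
  have hold (a : Fin (n + 1)) : faceVal (insertLastFace σ c) a = c.succAbove (σ a) :=
    (faceVal_val _ a.castSucc).trans (congrArg Fin.val (insertLastFace_castSucc σ c a))
  have hprev : faceVal (insertLastFace σ c) n = c.succAbove s := hold (Fin.last n)
  refine ⟨insertLastFace σ c, isExtension_insertLastFace σ c, fun x hx => ?_, ?_⟩
  · have hs : σ ⟨x, by omega⟩ ≠ s := σ.injective.ne (by simp [Fin.ext_iff, hx.ne])
    rw [hnew, hprev, hold ⟨x, by omega⟩, Fin.val_fin_lt, Fin.val_fin_lt,
      Fin.succAbove_lt_succAbove_iff, Fin.succAbove_lt_iff_castSucc_lt]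
    by_cases hp : p
    · simp [c, hp]
    · simp [c, hp, hs.le_iff_lt, Fin.castSucc_lt_succ_iff]
  · rw [hnew, hprev, Fin.val_fin_lt, Fin.lt_succAbove_iff_le_castSucc]
    by_cases hp : p <;> simp [c, hp]

theorem ValidLayerOrdering.existsUnique_adjacent_extension {n : ℕ} {μ : ℕ → MV}
    {σ : Equiv.Perm (Fin (n + 1))} (hσ : ValidLayerOrdering (n + 1) μ σ) :
    ∃! τ : Equiv.Perm (Fin (n + 2)),
      ValidLayerOrdering (n + 2) μ τ ∧ LastFacesAdjacent τ ∧ IsExtension σ τ := by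
  obtain ⟨τ, hext, hadj, hlast⟩ :=
    exists_isExtension_lastFacesAdjacent σ (CreaseDescends μ n)
  have hτ := hσ.of_isExtension hext hadj hlast
  exact ⟨τ, ⟨hτ, hadj, hext⟩, fun ρ ⟨hρ, hρadj, hρext⟩ =>
    hρ.eq_of_isExtension hτ hρadj hadj hρext hext⟩

theorem ValidLayerOrdering.lastFacesAdjacent_of_twoAlt {n : ℕ} (hn : Even n)
    {τ : Equiv.Perm (Fin (n + 2))} (hτ : ValidLayerOrdering (n + 2) twoAlt τ) :
    LastFacesAdjacent τ := by
  have hnc := noCrossings_iff.1 hτ.2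
  have hdir (k : ℕ) (hk : k ≤ n) :
      faceVal τ (k + 1) < faceVal τ k ↔ k % 4 = 0 ∨ k % 4 = 3 :=
    (mvRelations_iff.1 hτ.1 k (by omega)).trans creaseDescends_twoAlt_iff
  have hinj : Set.InjOn (faceVal τ) (Set.Iic (n + 1)) :=
    (injOn_faceVal τ).mono fun y hy => Nat.lt_succ_of_le hy
  have hne (y z : ℕ) (hy : y ≤ n + 1) (hz : z ≤ n + 1) (hyz : y ≠ z) : faceVal τ y ≠ faceVal τ z :=
    hinj.ne hy hz hyz
  obtain hmod | hmod : n % 4 = 0 ∨ n % 4 = 2 := by grind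
  · exact last_adjacent_of_descents hn hinj hnc fun k hk => (hdir k hk).trans (by omega)
  · intro x hx
    have hdirDual (k : ℕ) (hk : k ≤ n) :
        faceVal τ k < faceVal τ (k + 1) ↔ (n - k) % 4 ≤ 1 := by
      have := hne k (k + 1) (by omega) (by omega) (by omega)
      have := hdir k hk
      omega
    have hdual : faceVal τ n < faceVal τ x ↔ faceVal τ (n + 1) < faceVal τ x :=
      last_adjacent_of_descents hn (OrderDual.toDual.injective.comp_injOn hinj) hnc.toDual
        hdirDual x hx
    have := hne x n (by omega) (by omega) (by omega)
    have := hne x (n + 1) (by omega) (by omega) (by omega)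
    omega

end LayerOrderings

/-- Lemma: if `(i, i+1)` is a top arc (i.e. `i` is even) of the 2-alternating
assignment with `m` blocks, then every valid layer ordering of the faces `0, …, i`
extends to a valid layer ordering of the faces `0, …, i+1` in exactly one way. -/
theorem stmt8 (m i : ℕ) (hm : 1 ≤ m) (hi : i < 2 * m) (hieven : Even i)
    (σ : Equiv.Perm (Fin (i + 1))) (hσ : ValidLayerOrdering (i + 1) twoAlt σ) :
    ∃! τ : Equiv.Perm (Fin (i + 2)),
      ValidLayerOrdering (i + 2) twoAlt τ ∧
      ∀ a b : Fin (i + 1), σ a < σ b ↔ τ a.castSucc < τ b.castSucc := by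
  have hadj (τ : Equiv.Perm (Fin (i + 2))) (hτ : ValidLayerOrdering (i + 2) twoAlt τ) :
      LastFacesAdjacent τ := hτ.lastFacesAdjacent_of_twoAlt hieven
  obtain ⟨τ, ⟨hτ, -, hext⟩, huniq⟩ := hσ.existsUnique_adjacent_extension
  exact ⟨τ, ⟨hτ, hext⟩, fun ρ ⟨hρ, hρext⟩ => huniq ρ ⟨hρ, hadj ρ hρ, hρext⟩⟩
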